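/- Let A, B be integers and let p be an odd prime not dividing B·Δ, where Δ = A^2 − 4B. Then u_p(A,B) ≡ (A/2)·B^{((Δ/p)−1)/2}·u_{p−(Δ/p)}(A,B) + (Δ/p)·(B^{p−1}+1)/2 (mod p^2), where the congruence is between rational numbers whose denominators are coprime to p (i.e., it holds in the localization ℤ_(p)). -/

import Mathlib

/-- `x ≡ y (mod p^n)` as rational numbers, i.e. in the localization `ℤ_(p)`. -/
def ratModCast (p n : ℕ) (x y : ℚ) : Prop :=
  ∃ z : ℚ, x - y = (p : ℚ) ^ n * z ∧ ¬ (p ∣ z.den)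

/-- The Lucas sequence `u_n(A,B)`: `u_0 = 0`, `u_1 = 1`, `u_{n+1} = A·u_n − B·u_{n−1}`. -/
def lucasU (A B : ℤ) : ℕ → ℤ
  | 0 => 0
  | 1 => 1
  | n + 2 => A * lucasU A B (n + 1) - B * lucasU A B n

/-!
Let `v_n` be the companion sequence of `u_n` and `ε = (Δ/p)`. The `p`-th power of `A + √Δ` modulo
`p` gives `u_p ≡ ε` and `v_p ≡ A`, whence `p ∣ u_n` for `n = p - ε`. The identity
`v_n² - Δ u_n² = 4 Bⁿ` then shows `v_n² ≡ 4 Bⁿ` modulo `p²`. With `c = B^(p-1) ≡ 1` modulo `p`, the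
difference `(c + 1)² - 4c = (c - 1)²` vanishes modulo `p²`, so `4 Bⁿ` is there the square of
`B^((1-ε)/2) (c + 1)`, and the value of `v_n` modulo `p` selects the sign of the root. Finally
`u_p` is a linear combination of `u_n` and `v_n`.
-/

/-- The companion Lucas sequence `v_n(A,B)`, with `v_n = αⁿ + βⁿ` for the roots `α`, `β` of
`X² - A X + B`. Its values at `p ± 1` express `u_p` in terms of `u_{p ± 1}`. -/
def lucasV (A B : ℤ) : ℕ → ℤ
  | 0 => 2
  | 1 => A
  | n + 2 => A * lucasV A B (n + 1) - B * lucasV A B n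

section Identities

variable (A B : ℤ)

theorem lucasU_add_two (n : ℕ) :
    lucasU A B (n + 2) = A * lucasU A B (n + 1) - B * lucasU A B n := rfl

theorem lucasV_eq_two_mul_lucasU_succ_sub :
    ∀ n, lucasV A B n = 2 * lucasU A B (n + 1) - A * lucasU A B n
  | 0 => by simp [lucasU, lucasV]
  | 1 => by simp [lucasU, lucasV]; ring
  | n + 2 => by
    rw [lucasV, lucasV_eq_two_mul_lucasU_succ_sub (n + 1), lucasV_eq_two_mul_lucasU_succ_sub n,
      lucasU_add_two A B (n + 1), lucasU_add_two A B n]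
    ring

theorem lucasV_succ_eq_mul_lucasU_succ_sub (n : ℕ) :
    lucasV A B (n + 1) = A * lucasU A B (n + 1) - 2 * B * lucasU A B n := by
  rw [lucasV_eq_two_mul_lucasU_succ_sub, lucasU_add_two]
  ring

theorem lucasV_sq_sub_discrim_mul_lucasU_sq (n : ℕ) :
    lucasV A B n ^ 2 - (A ^ 2 - 4 * B) * lucasU A B n ^ 2 = 4 * B ^ n := by
  induction n with
  | zero => simp [lucasU, lucasV]
  | succ n ih =>
    rw [lucasV_eq_two_mul_lucasU_succ_sub] at ih
    rw [lucasV_succ_eq_mul_lucasU_succ_sub]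
    linear_combination B * ih

theorem two_mul_add_pow_eq_lucasV_add_lucasU_mul {R : Type*} [CommRing R] {δ : R}
    (hδ : δ ^ 2 = (A ^ 2 - 4 * B : ℤ)) (n : ℕ) :
    2 * (A + δ) ^ n = 2 ^ n * (lucasV A B n + lucasU A B n * δ) := by
  induction n with
  | zero => simp [lucasU, lucasV]
  | succ n ih =>
    rw [lucasV_eq_two_mul_lucasU_succ_sub] at ih
    rw [lucasV_succ_eq_mul_lucasU_succ_sub]
    push_cast at ih hδ ⊢
    linear_combination (A + δ) * ih + 2 ^ n * lucasU A B n * hδ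

end Identities

section CharP

variable {p : ℕ} [Fact p.Prime]

theorem intCast_legendreSym_eq_pow {R : Type*} [CommRing R] [CharP R p] (a : ℤ) :
    (legendreSym p a : R) = (a : R) ^ (p / 2) := by
  have h := congrArg (ZMod.castHom dvd_rfl R) (legendreSym.eq_pow p a)
  simpa only [map_pow, map_intCast] using h

theorem lucasV_add_lucasU_mul_eq_add_legendreSym_mul {R : Type*} [CommRing R] [CharP R p]
    (hp : p ≠ 2) {A B : ℤ} {δ : R} (hδ : δ ^ 2 = (A ^ 2 - 4 * B : ℤ)) :
    lucasV A B p + lucasU A B p * δ = A + legendreSym p (A ^ 2 - 4 * B) * δ := by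
  have δ_pow : δ ^ p = legendreSym p (A ^ 2 - 4 * B) * δ := by
    rw [intCast_legendreSym_eq_pow, ← hδ, ← pow_mul, ← pow_succ,
      Nat.two_mul_div_two_add_one_of_odd (Nat.Prime.odd_of_ne_two Fact.out hp)]
  have intCast_pow_char (a : ℤ) : (a : R) ^ p = a := map_intCast (frobenius R p) a
  have two_pow : (2 : R) ^ p = 2 := mod_cast intCast_pow_char 2
  have isUnit_two : IsUnit (2 : R) :=
    (CharP.isUnit_ofNat_iff Fact.out).2 fun h ↦
      hp ((Nat.prime_dvd_prime_iff_eq Fact.out Nat.prime_two).1 h)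
  have h := two_mul_add_pow_eq_lucasV_add_lucasU_mul A B hδ p
  rw [add_pow_char, intCast_pow_char, two_pow, δ_pow] at h
  exact (isUnit_two.mul_left_cancel h).symm

open QuadraticAlgebra in
theorem lucasV_prime_modEq_and_lucasU_prime_modEq_legendreSym (hp : p ≠ 2) (A B : ℤ) :
    lucasV A B p ≡ A [ZMOD p] ∧ lucasU A B p ≡ legendreSym p (A ^ 2 - 4 * B) [ZMOD p] := by
  let Δ := A ^ 2 - 4 * B
  have : CharP (QuadraticAlgebra (ZMod p) Δ 0) p :=
    charP_of_injective_algebraMap QuadraticAlgebra.algebraMap_injective p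
  have omega_sq : (ω : QuadraticAlgebra (ZMod p) Δ 0) ^ 2 = Δ := by
    rw [pow_two, omega_mul_omega_eq_mk]
    rfl
  have h := lucasV_add_lucasU_mul_eq_add_legendreSym_mul hp omega_sq
  simp only [← ZMod.intCast_eq_intCast_iff]
  exact ⟨by simpa using congrArg QuadraticAlgebra.re h,
    by simpa using congrArg QuadraticAlgebra.im h⟩

end CharP

theorem lucasV_modEq_pow_mul_pow_add_one {A B q : ℤ} {m k n : ℕ} (hn : n = m + 2 * k)
    (hq : IsCoprime q (2 * B)) (hB : B ^ m ≡ 1 [ZMOD q]) (hU : q ∣ lucasU A B n)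
    (hV : lucasV A B n ≡ 2 * B ^ k [ZMOD q]) :
    lucasV A B n ≡ B ^ k * (B ^ m + 1) [ZMOD q ^ 2] := by
  have norm_eq := lucasV_sq_sub_discrim_mul_lucasU_sq A B n
  rw [hn, pow_add, pow_mul', ← hn] at norm_eq
  set V := lucasV A B n
  set U := lucasU A B n
  set W := B ^ k * (B ^ m + 1)
  have sq_sub_sq_eq : V ^ 2 - W ^ 2 = (A ^ 2 - 4 * B) * U ^ 2 - (B ^ k) ^ 2 * (B ^ m - 1) ^ 2 := by
    linear_combination norm_eq
  have dvd_sq_sub_sq : q ^ 2 ∣ V ^ 2 - W ^ 2 := by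
    rw [sq_sub_sq_eq]
    exact dvd_sub ((pow_dvd_pow_of_dvd hU 2).mul_left _)
      ((pow_dvd_pow_of_dvd hB.symm.dvd 2).mul_left _)
  have add_modEq : V + W ≡ 2 * 2 * B ^ k [ZMOD q] := by
    convert hV.add ((hB.add_right 1).mul_left (B ^ k)) using 1
    ring
  have coprime_add : IsCoprime q (V + W) := by
    obtain ⟨c, hc⟩ := add_modEq.dvd
    have hq2 := hq.of_mul_right_left
    have h : IsCoprime q (2 * 2 * B ^ k) :=
      (hq2.mul_right hq2).mul_right hq.of_mul_right_right.pow_right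
    rw [eq_add_of_sub_eq hc, IsCoprime.mul_add_left_right_iff] at h
    exact h
  refine (Int.modEq_iff_dvd.2 ?_).symm
  rw [sq_sub_sq] at dvd_sq_sub_sq
  exact coprime_add.pow_left.dvd_of_dvd_mul_left dvd_sq_sub_sq

section ModPrimeSq

variable {p : ℕ} [Fact p.Prime] {A B : ℤ}

theorem isCoprime_two_of_prime_ne_two (hp : p ≠ 2) : IsCoprime (p : ℤ) 2 := by
  exact_mod_cast Nat.isCoprime_iff_coprime.2 ((Nat.coprime_primes Fact.out Nat.prime_two).2 hp)

theorem isCoprime_two_mul_of_prime_not_dvd (hp : p ≠ 2) (hB : ¬ (p : ℤ) ∣ B) :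
    IsCoprime (p : ℤ) (2 * B) :=
  (isCoprime_two_of_prime_ne_two hp).mul_right
    ((Nat.prime_iff_prime_int.1 Fact.out).coprime_iff_not_dvd.2 hB)

theorem dvd_lucasU_sub_one_of_legendreSym_eq_one (hp : p ≠ 2) (hB : ¬ (p : ℤ) ∣ B)
    (hε : legendreSym p (A ^ 2 - 4 * B) = 1) : (p : ℤ) ∣ lucasU A B (p - 1) := by
  obtain ⟨hV, hU⟩ := lucasV_prime_modEq_and_lucasU_prime_modEq_legendreSym hp A B
  rw [hε] at hU
  have V_eq := lucasV_succ_eq_mul_lucasU_succ_sub A B (p - 1)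
  rw [Nat.sub_add_cancel (Fact.out : p.Prime).one_le] at V_eq
  refine (isCoprime_two_mul_of_prime_not_dvd hp hB).dvd_of_dvd_mul_left ?_
  rw [show 2 * B * lucasU A B (p - 1) = A * lucasU A B p - lucasV A B p by linarith only [V_eq]]
  simpa [Int.modEq_zero_iff_dvd] using (hU.mul_left A).sub hV

theorem dvd_lucasU_add_one_of_legendreSym_eq_neg_one (hp : p ≠ 2)
    (hε : legendreSym p (A ^ 2 - 4 * B) = -1) : (p : ℤ) ∣ lucasU A B (p + 1) := by
  obtain ⟨hV, hU⟩ := lucasV_prime_modEq_and_lucasU_prime_modEq_legendreSym hp A B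
  rw [hε] at hU
  have V_eq := lucasV_eq_two_mul_lucasU_succ_sub A B p
  refine (isCoprime_two_of_prime_ne_two hp).dvd_of_dvd_mul_left ?_
  rw [show 2 * lucasU A B (p + 1) = lucasV A B p + A * lucasU A B p by linarith only [V_eq]]
  simpa [Int.modEq_zero_iff_dvd] using hV.add (hU.mul_left A)

theorem two_mul_lucasU_modEq_of_legendreSym_eq_one (hp : p ≠ 2) (hB : ¬ (p : ℤ) ∣ B)
    (hε : legendreSym p (A ^ 2 - 4 * B) = 1) :
    2 * lucasU A B p ≡ A * lucasU A B (p - 1) + (B ^ (p - 1) + 1) [ZMOD p ^ 2] := by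
  have coprime_two_mul := isCoprime_two_mul_of_prime_not_dvd hp hB
  have fermat := Int.ModEq.pow_card_sub_one_eq_one Fact.out coprime_two_mul.of_mul_right_right.symm
  have hU := (lucasV_prime_modEq_and_lucasU_prime_modEq_legendreSym hp A B).2
  rw [hε] at hU
  have dvd_U_pred := dvd_lucasU_sub_one_of_legendreSym_eq_one hp hB hε
  have V_pred_eq := lucasV_eq_two_mul_lucasU_succ_sub A B (p - 1)
  rw [Nat.sub_add_cancel (Fact.out : p.Prime).one_le] at V_pred_eq
  have V_pred_modEq : lucasV A B (p - 1) ≡ 2 * B ^ 0 [ZMOD p] := by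
    rw [V_pred_eq]
    simpa using (hU.mul_left 2).sub ((Int.modEq_zero_iff_dvd.2 dvd_U_pred).mul_left A)
  have V_pred_modEq_sq := lucasV_modEq_pow_mul_pow_add_one (k := 0) rfl coprime_two_mul
    fermat dvd_U_pred V_pred_modEq
  rw [show 2 * lucasU A B p = A * lucasU A B (p - 1) + lucasV A B (p - 1)
    by linarith only [V_pred_eq]]
  simpa using V_pred_modEq_sq.add_left (A * lucasU A B (p - 1))

theorem two_mul_mul_lucasU_modEq_of_legendreSym_eq_neg_one (hp : p ≠ 2) (hB : ¬ (p : ℤ) ∣ B)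
    (hε : legendreSym p (A ^ 2 - 4 * B) = -1) :
    2 * B * lucasU A B p ≡ A * lucasU A B (p + 1) - B * (B ^ (p - 1) + 1) [ZMOD p ^ 2] := by
  have coprime_two_mul := isCoprime_two_mul_of_prime_not_dvd hp hB
  have fermat := Int.ModEq.pow_card_sub_one_eq_one Fact.out coprime_two_mul.of_mul_right_right.symm
  have hU := (lucasV_prime_modEq_and_lucasU_prime_modEq_legendreSym hp A B).2
  rw [hε] at hU
  have dvd_U_succ := dvd_lucasU_add_one_of_legendreSym_eq_neg_one hp hε
  have V_succ_eq := lucasV_succ_eq_mul_lucasU_succ_sub A B p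
  have V_succ_modEq : lucasV A B (p + 1) ≡ 2 * B ^ 1 [ZMOD p] := by
    rw [V_succ_eq]
    simpa using ((Int.modEq_zero_iff_dvd.2 dvd_U_succ).mul_left A).sub (hU.mul_left (2 * B))
  have succ_eq : p + 1 = p - 1 + 2 * 1 := by
    have := (Fact.out : p.Prime).one_le
    lia
  have V_succ_modEq_sq := lucasV_modEq_pow_mul_pow_add_one succ_eq coprime_two_mul
    fermat dvd_U_succ V_succ_modEq
  rw [show 2 * B * lucasU A B p = A * lucasU A B (p + 1) - lucasV A B (p + 1)
    by linarith only [V_succ_eq]]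
  simpa using V_succ_modEq_sq.sub_left (A * lucasU A B (p + 1))

end ModPrimeSq

theorem ratModCast_of_mul_eq_intCast {p n : ℕ} {d a b : ℤ} {x y : ℚ} (hd : ¬ (p : ℤ) ∣ d)
    (hx : d * x = a) (hy : d * y = b) (hab : a ≡ b [ZMOD p ^ n]) : ratModCast p n x y := by
  obtain ⟨z, hz⟩ := hab.symm.dvd
  have d_ne_zero : (d : ℚ) ≠ 0 := Int.cast_ne_zero.2 fun h ↦ hd (h ▸ dvd_zero _)
  refine ⟨z / d, ?_, fun h ↦ hd ?_⟩
  · apply mul_left_cancel₀ d_ne_zero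
    rw [mul_sub, hx, hy, ← Int.cast_sub, hz]
    push_cast
    field_simp
  · rw [← Rat.divInt_eq_div] at h
    exact (Int.natCast_dvd_natCast.2 h).trans (Rat.den_dvd z d)

theorem lucasU_p_cong (A B : ℤ) (p : ℕ) (hp : p.Prime) (hp2 : p ≠ 2)
    (hpB : ¬ ((p : ℤ) ∣ B * (A ^ 2 - 4 * B))) :
    ratModCast p 2
      ((lucasU A B p : ℚ))
      ((A : ℚ) / 2 * (B : ℚ) ^ ((jacobiSym (A ^ 2 - 4 * B) p - 1) / 2) *
          (lucasU A B (((p : ℤ) - jacobiSym (A ^ 2 - 4 * B) p).toNat) : ℚ) +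
        (jacobiSym (A ^ 2 - 4 * B) p : ℚ) * ((B : ℚ) ^ (p - 1) + 1) / 2) := by
  have : Fact p.Prime := ⟨hp⟩
  have hB : ¬ (p : ℤ) ∣ B := fun h ↦ hpB (h.mul_right _)
  have hΔ : ((A ^ 2 - 4 * B : ℤ) : ZMod p) ≠ 0 := fun h ↦
    hpB (((ZMod.intCast_zmod_eq_zero_iff_dvd _ _).1 h).mul_left _)
  have not_dvd_two_mul : ¬ (p : ℤ) ∣ 2 * B :=
    (Nat.prime_iff_prime_int.1 hp).coprime_iff_not_dvd.1 (isCoprime_two_mul_of_prime_not_dvd hp2 hB)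
  rw [← jacobiSym.legendreSym.to_jacobiSym]
  rcases legendreSym.eq_one_or_neg_one p hΔ with hε | hε
  · rw [hε, show ((p : ℤ) - 1).toNat = p - 1 by lia, show ((1 : ℤ) - 1) / 2 = 0 from rfl, zpow_zero]
    refine ratModCast_of_mul_eq_intCast (d := 2) (fun h ↦ not_dvd_two_mul (h.mul_right B))
      (by push_cast; rfl) ?_ (two_mul_lucasU_modEq_of_legendreSym_eq_one hp2 hB hε)
    push_cast
    ring
  · rw [hε, show ((p : ℤ) - -1).toNat = p + 1 by lia,
      show ((-1 : ℤ) - 1) / 2 = -1 from rfl, zpow_neg_one]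
    have hB0 : (B : ℚ) ≠ 0 := Int.cast_ne_zero.2 fun h ↦ hB (h ▸ dvd_zero _)
    refine ratModCast_of_mul_eq_intCast not_dvd_two_mul (by push_cast; rfl) ?_
      (two_mul_mul_lucasU_modEq_of_legendreSym_eq_neg_one hp2 hB hε)
    push_cast
    field_simp
    ring
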